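/- For every τ₁ ∈ ℍ₁ and τ₂ ∈ ℍ₂, the genus 3 ansatz factors on the decomposable locus: Ξ^{(3)}(τ₁ ⊕ τ₂) = Ξ^{(1)}(τ₁) · Ξ^{(2)}(τ₂), where τ₁ ⊕ τ₂ ∈ ℍ₃ is the block-diagonal period matrix with blocks τ₁ and τ₂. -/

import Mathlib

open scoped BigOperators

abbrev ThetaChar (g : ℕ) := (Fin g → ZMod 2) × (Fin g → ZMod 2)

/-- Theta constant with characteristic `v = [ε; δ]`. -/
noncomputable def theta {g : ℕ} (v : ThetaChar g) (τ : Matrix (Fin g) (Fin g) ℂ) : ℂ :=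
  ∑' n : Fin g → ℤ,
    Complex.exp ((Real.pi : ℂ) * Complex.I *
      ((∑ i, ∑ j, ((n i : ℂ) + ((v.1 i).val : ℂ) / 2) * τ i j *
          ((n j : ℂ) + ((v.1 j).val : ℂ) / 2)) +
        ∑ i, ((n i : ℂ) + ((v.1 i).val : ℂ) / 2) * ((v.2 i).val : ℂ)))

/-- Siegel upper half-space membership. -/
def IsSiegel {g : ℕ} (τ : Matrix (Fin g) (Fin g) ℂ) : Prop :=
  τ.IsSymm ∧ Matrix.PosDef (τ.map Complex.im)

noncomputable def Pset {g : ℕ} (M : Set (ThetaChar g)) (τ : Matrix (Fin g) (Fin g) ℂ) : ℂ :=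
  ∏ᶠ v ∈ M, theta v τ

noncomputable def Pform (g i s : ℕ) (τ : Matrix (Fin g) (Fin g) ℂ) : ℂ :=
  ∑ᶠ V ∈ {V : Submodule (ZMod 2) (ThetaChar g) | Module.finrank (ZMod 2) ↥V = i},
    Pset (V : Set (ThetaChar g)) τ ^ s

noncomputable def Nsub (n m i : ℕ) : ℕ :=
  Nat.card {V : Submodule (ZMod 2) ((Fin n → ZMod 2) × (Fin m → ZMod 2)) //
    Module.finrank (ZMod 2) ↥V = i ∧
    V.map (LinearMap.fst (ZMod 2) (Fin n → ZMod 2) (Fin m → ZMod 2)) = ⊤ ∧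
    V.map (LinearMap.snd (ZMod 2) (Fin n → ZMod 2) (Fin m → ZMod 2)) = ⊤}

noncomputable def blockDiag {k l : ℕ} (τ₁ : Matrix (Fin k) (Fin k) ℂ)
    (τ₂ : Matrix (Fin l) (Fin l) ℂ) : Matrix (Fin (k + l)) (Fin (k + l)) ℂ :=
  Matrix.reindex finSumFinEquiv finSumFinEquiv (Matrix.fromBlocks τ₁ 0 0 τ₂)

def chproj1 (k l : ℕ) : ThetaChar (k + l) →ₗ[ZMod 2] ThetaChar k :=
  (LinearMap.funLeft (ZMod 2) (ZMod 2) (Fin.castAdd l)).prodMap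
    (LinearMap.funLeft (ZMod 2) (ZMod 2) (Fin.castAdd l))

def chproj2 (k l : ℕ) : ThetaChar (k + l) →ₗ[ZMod 2] ThetaChar l :=
  (LinearMap.funLeft (ZMod 2) (ZMod 2) (Fin.natAdd k)).prodMap
    (LinearMap.funLeft (ZMod 2) (ZMod 2) (Fin.natAdd k))

def weil {g : ℕ} (v w : ThetaChar g) : ZMod 2 :=
  (∑ i, v.1 i * w.2 i) + (∑ i, v.2 i * w.1 i)

def evenChar {g : ℕ} (v : ThetaChar g) : Prop := (∑ i, v.1 i * v.2 i) = 0

def qform {g : ℕ} (Δ v : ThetaChar g) : ZMod 2 :=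
  (∑ i, v.1 i * v.2 i) + (∑ i, Δ.1 i * v.2 i) + (∑ i, Δ.2 i * v.1 i)

noncomputable def Gform (g i : ℕ) (τ : Matrix (Fin g) (Fin g) ℂ) : ℂ :=
  Pform g i (2 ^ (4 - i)) τ

noncomputable def Xi1 (τ : Matrix (Fin 1) (Fin 1) ℂ) : ℂ :=
  (1 / 2) * (Gform 1 0 τ - Gform 1 1 τ)

noncomputable def Xi2 (τ : Matrix (Fin 2) (Fin 2) ℂ) : ℂ :=
  (1 / 4) * (Gform 2 0 τ - Gform 2 1 τ + 2 * Gform 2 2 τ)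

noncomputable def Xi3 (τ : Matrix (Fin 3) (Fin 3) ℂ) : ℂ :=
  (1 / 8) * (Gform 3 0 τ - Gform 3 1 τ + 2 * Gform 3 2 τ - 8 * Gform 3 3 τ)

noncomputable def Xi4 (τ : Matrix (Fin 4) (Fin 4) ℂ) : ℂ :=
  (1 / 16) * (Gform 4 0 τ - Gform 4 1 τ + 2 * Gform 4 2 τ - 8 * Gform 4 3 τ +
    64 * Gform 4 4 τ)

open Classical in
noncomputable def Fsub {g : ℕ} (τ : Matrix (Fin g) (Fin g) ℂ) (V : Submodule (ZMod 2) (ThetaChar g)) : ℂ :=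
  (∏ v : V, theta (v : ThetaChar g) τ) ^ (2 ^ (4 - Module.finrank (ZMod 2) V))

def cco : ℕ → ℂ
  | 0 => 1
  | 1 => -1
  | 2 => 2
  | 3 => -8
  | _ => 0

open Classical in
lemma Pset_eq {g : ℕ} (τ : Matrix (Fin g) (Fin g) ℂ) (V : Submodule (ZMod 2) (ThetaChar g)) :
    Pset (V : Set (ThetaChar g)) τ = ∏ v : V, theta (v : ThetaChar g) τ := by
  unfold Pset
  rw [finprod_mem_eq_finite_toFinset_prod _ (Set.toFinite _)]
  apply Finset.prod_subtype
  simp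

open Classical in
lemma Gform_eq {g : ℕ} (i : ℕ) (τ : Matrix (Fin g) (Fin g) ℂ) :
    Gform g i τ = ∑ V : Submodule (ZMod 2) (ThetaChar g),
      if Module.finrank (ZMod 2) V = i then Fsub τ V else 0 := by
  unfold Gform Pform
  rw [finsum_mem_eq_finite_toFinset_sum _ (Set.toFinite _), ← Finset.sum_filter]
  apply Finset.sum_congr
  · ext V; simp
  · intro V hV
    simp only [Finset.mem_filter] at hV
    rw [Pset_eq, Fsub, hV.2]

open Classical in
lemma sum_cco {g : ℕ} (τ : Matrix (Fin g) (Fin g) ℂ) :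
    ∑ V : Submodule (ZMod 2) (ThetaChar g), cco (Module.finrank (ZMod 2) V) * Fsub τ V =
      Gform g 0 τ - Gform g 1 τ + 2 * Gform g 2 τ - 8 * Gform g 3 τ := by
  simp only [Gform_eq, Finset.mul_sum, ← Finset.sum_sub_distrib, ← Finset.sum_add_distrib]
  apply Finset.sum_congr rfl
  intro V _
  rcases h : Module.finrank (ZMod 2) V with _ | _ | _ | _ | n <;> simp [cco]

/-- odd theta constants vanish -/
lemma theta_odd {g : ℕ} (v : ThetaChar g) (τ : Matrix (Fin g) (Fin g) ℂ)
    (h : ¬ evenChar v) : theta v τ = 0 := by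
  have hodd : Odd (∑ i, (v.1 i).val * (v.2 i).val) := by
    rw [← ZMod.natCast_eq_one_iff_odd]
    push_cast
    simp only [ZMod.natCast_val, ZMod.cast_id', id_eq]
    unfold evenChar at h
    generalize (∑ i, v.1 i * v.2 i) = x at h
    revert x; decide
  let e : (Fin g → ℤ) ≃ (Fin g → ℤ) :=
    { toFun := fun n i => - n i - ((v.1 i).val : ℤ)
      invFun := fun n i => - n i - ((v.1 i).val : ℤ)
      left_inv := fun n => by ext i; simp
      right_inv := fun n => by ext i; simp }
  have key : theta v τ = - theta v τ := by
    conv_lhs => unfold theta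
    rw [← e.tsum_eq]
    unfold theta
    rw [← tsum_neg]
    apply tsum_congr
    intro n
    have h1 : ∀ i, ((e n i : ℤ) : ℂ) + ((v.1 i).val : ℂ) / 2 = -((n i : ℂ) + ((v.1 i).val : ℂ) / 2) := by
      intro i
      simp only [e, Equiv.coe_fn_mk]
      push_cast
      ring
    simp only [h1, neg_mul, mul_neg, neg_neg, Finset.sum_neg_distrib]
    obtain ⟨k, hk⟩ := hodd
    have hk' : ∑ i, ((v.1 i).val : ℂ) * ((v.2 i).val : ℂ) = 2 * k + 1 := by exact_mod_cast hk
    set S := ∑ i, ∑ j, ((n i : ℂ) + ((v.1 i).val : ℂ) / 2) * τ i j *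
          ((n j : ℂ) + ((v.1 j).val : ℂ) / 2)
    have h2 : ∑ i, ((n i : ℂ) + ((v.1 i).val : ℂ) / 2) * ((v.2 i).val : ℂ) =
        ((∑ i, n i * ((v.2 i).val : ℤ) : ℤ) : ℂ) + (2 * k + 1) / 2 := by
      rw [← hk']
      push_cast
      rw [Finset.sum_div, ← Finset.sum_add_distrib]
      apply Finset.sum_congr rfl
      intros; ring
    rw [h2]
    generalize (∑ i, n i * ((v.2 i).val : ℤ) : ℤ) = m
    have h3 : (Real.pi : ℂ) * Complex.I * (S + (m + (2 * k + 1) / 2)) =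
      (Real.pi : ℂ) * Complex.I * (S + -(m + (2 * k + 1) / 2)) + Real.pi * Complex.I
        + ((m + k : ℤ) : ℂ) * (2 * Real.pi * Complex.I) := by push_cast; ring
    rw [h3, Complex.exp_add, Complex.exp_add, Complex.exp_int_mul_two_pi_mul_I, Complex.exp_pi_mul_I]
    ring
  have : theta v τ + theta v τ = 0 := by nth_rewrite 1 [key]; ring
  simpa using this

lemma tsum_prod_field {α β : Type*} (f : α → ℂ) (g : β → ℂ) (hf : ∀ a, f a ≠ 0)
    (hg : ∀ b, g b ≠ 0) [Nonempty α] [Nonempty β] :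
    ∑' x : α × β, f x.1 * g x.2 = (∑' a, f a) * ∑' b, g b := by
  by_cases h1 : Summable f
  · by_cases h2 : Summable g
    · exact (tsum_mul_tsum_of_summable_norm h1.norm h2.norm).symm
    · rw [tsum_eq_zero_of_not_summable h2, mul_zero]
      apply tsum_eq_zero_of_not_summable
      intro h
      obtain ⟨a⟩ := ‹Nonempty α›
      exact h2 ((summable_mul_left_iff (hf a)).1 (h.prod_factor a))
  · rw [tsum_eq_zero_of_not_summable h1, zero_mul]
    apply tsum_eq_zero_of_not_summable
    intro h
    obtain ⟨b⟩ := ‹Nonempty β›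
    exact h1 ((summable_mul_right_iff (hg b)).1 (h.prod_symm.prod_factor b))

lemma theta_block {k l : ℕ} (v : ThetaChar (k + l)) (τ₁ : Matrix (Fin k) (Fin k) ℂ)
    (τ₂ : Matrix (Fin l) (Fin l) ℂ) :
    theta v (blockDiag τ₁ τ₂) = theta (chproj1 k l v) τ₁ * theta (chproj2 k l v) τ₂ := by
  unfold theta
  rw [← tsum_prod_field _ _ (fun _ => Complex.exp_ne_zero _) (fun _ => Complex.exp_ne_zero _),
    ← (Fin.appendEquiv k l).tsum_eq]
  apply tsum_congr
  rintro ⟨a, b⟩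
  rw [← Complex.exp_add]
  congr 1
  simp [Fin.sum_univ_add, blockDiag, chproj1, chproj2, LinearMap.funLeft_apply]
  ring

open Classical in
lemma Fsub_odd {g : ℕ} (τ : Matrix (Fin g) (Fin g) ℂ) (V : Submodule (ZMod 2) (ThetaChar g))
    (v : ThetaChar g) (hv : v ∈ V) (ho : ¬ evenChar v) : Fsub τ V = 0 := by
  unfold Fsub
  rw [Finset.prod_eq_zero (Finset.mem_univ (⟨v, hv⟩ : V)) (theta_odd v τ ho)]
  simp

lemma Fsub_one (τ : Matrix (Fin 1) (Fin 1) ℂ) (V : Submodule (ZMod 2) (ThetaChar 1))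
    (h : 2 ≤ Module.finrank (ZMod 2) V) : Fsub τ V = 0 := by
  have : V = ⊤ := by
    apply Submodule.eq_top_of_finrank_eq
    have := V.finrank_le
    simp at this ⊢
    omega
  subst this
  exact Fsub_odd τ _ (1, 1) trivial (by unfold evenChar; decide)

def o1 : ThetaChar 2 := (![1, 0], ![1, 0])
def o2 : ThetaChar 2 := (![1, 1], ![0, 1])

lemma Fsub_two (τ : Matrix (Fin 2) (Fin 2) ℂ) (V : Submodule (ZMod 2) (ThetaChar 2))
    (h : 3 ≤ Module.finrank (ZMod 2) V) : Fsub τ V = 0 := by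
  let f : (V × ZMod 2 × ZMod 2) →ₗ[ZMod 2] ThetaChar 2 :=
    V.subtype.coprod ((LinearMap.toSpanSingleton (ZMod 2) _ o1).coprod
      (LinearMap.toSpanSingleton (ZMod 2) _ o2))
  have hk : LinearMap.ker f ≠ ⊥ := by
    apply LinearMap.ker_ne_bot_of_finrank_lt
    simp
    omega
  obtain ⟨⟨⟨v, hv⟩, a, b⟩, hx, hx0⟩ := Submodule.exists_mem_ne_zero_of_ne_bot hk
  have hve : v = a • o1 + b • o2 := by
    have : v + (a • o1 + b • o2) = 0 := by simpa [f] using hx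
    rw [add_eq_zero_iff_eq_neg] at this
    rw [this]
    clear * -
    revert a b; decide
  have hab : ¬ (a = 0 ∧ b = 0) := by
    rintro ⟨rfl, rfl⟩
    simp at hve
    exact hx0 (by simp [hve])
  apply Fsub_odd τ V v hv
  rw [hve]
  clear * - hab
  unfold evenChar
  revert a b; decide

open Classical in
lemma prod_map_pow {T A : Type} [AddCommGroup T] [Module (ZMod 2) T] [Fintype T]
    [AddCommGroup A] [Module (ZMod 2) A] [Fintype A] (V : Submodule (ZMod 2) T)
    (p : T →ₗ[ZMod 2] A) (t : A → ℂ) (h : Module.finrank (ZMod 2) V ≤ 4) :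
    (∏ v : V, t (p v)) ^ (2 ^ (4 - Module.finrank (ZMod 2) V)) =
      (∏ w : V.map p, t w) ^ (2 ^ (4 - Module.finrank (ZMod 2) (V.map p))) := by
  let f : V →ₗ[ZMod 2] V.map p := p.submoduleMap V
  have hf : Function.Surjective f := p.submoduleMap_surjective V
  obtain ⟨k, hk⟩ : ∃ k, ∀ w : V.map p, (Finset.univ.filter (fun v => f v = w)).card = k := by
    refine ⟨(Finset.univ.filter (fun v => f v = 0)).card, fun w => ?_⟩
    exact AddMonoidHom.card_fiber_eq_of_mem_range f.toAddMonoidHom (hf w) ⟨0, map_zero _⟩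
  have h1 : ∏ v : V, t (p v) = (∏ w : V.map p, t w) ^ k := by
    rw [← Finset.prod_fiberwise (Finset.univ) f, ← Finset.prod_pow]
    apply Finset.prod_congr rfl
    intro w _
    rw [← hk w, ← Finset.prod_const]
    apply Finset.prod_congr rfl
    intro v hv
    rw [Finset.mem_filter] at hv
    rw [← hv.2]
    rfl
  have h2 : Fintype.card V = Fintype.card (V.map p) * k := by
    rw [← Finset.card_univ, Finset.card_eq_sum_card_fiberwise (f := f) (t := Finset.univ) (by simp)]
    simp [hk]
  rw [Module.card_eq_pow_finrank (K := ZMod 2) (V := V),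
    Module.card_eq_pow_finrank (K := ZMod 2) (V := V.map p), ZMod.card] at h2
  rw [h1, ← pow_mul]
  congr 1
  have hle : Module.finrank (ZMod 2) (V.map p) ≤ Module.finrank (ZMod 2) V :=
    Submodule.finrank_map_le p V
  generalize Module.finrank (ZMod 2) (V.map p) = b at *
  generalize Module.finrank (ZMod 2) V = a at *
  have h3 : 2 ^ b * (k * 2 ^ (4 - a)) = 2 ^ b * 2 ^ (4 - b) := by
    rw [← mul_assoc, ← h2, ← pow_add, ← pow_add]
    congr 1; omega
  exact Nat.eq_of_mul_eq_mul_left (by positivity) h3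

section count
variable {A B : Type} [AddCommGroup A] [Module (ZMod 2) A] [Fintype A]
    [AddCommGroup B] [Module (ZMod 2) B] [Fintype B]

lemma finrank_subprod (V₁ : Submodule (ZMod 2) A) (V₂ : Submodule (ZMod 2) B) :
    Module.finrank (ZMod 2) (V₁.prod V₂) =
      Module.finrank (ZMod 2) V₁ + Module.finrank (ZMod 2) V₂ := by
  rw [← Module.finrank_prod]
  have h : V₁.prod V₂ = LinearMap.range (V₁.subtype.prodMap V₂.subtype) := by
    rw [LinearMap.range_prodMap]; simp
  rw [h]
  apply LinearMap.finrank_range_of_inj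
  rintro ⟨a, b⟩ ⟨a', b'⟩ hab
  simpa using hab

def gr (e : A) (V₂ : Submodule (ZMod 2) B) (φ : Module.Dual (ZMod 2) V₂) :
    V₂ →ₗ[ZMod 2] A × B :=
  ((LinearMap.toSpanSingleton (ZMod 2) A e).comp φ).prod V₂.subtype

lemma gr_apply (e : A) (V₂ : Submodule (ZMod 2) B) (φ : Module.Dual (ZMod 2) V₂) (w : V₂) :
    gr e V₂ φ w = (φ w • e, (w : B)) := rfl

lemma finrank_gr (e : A) (V₂ : Submodule (ZMod 2) B) (φ : Module.Dual (ZMod 2) V₂) :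
    Module.finrank (ZMod 2) (LinearMap.range (gr e V₂ φ)) = Module.finrank (ZMod 2) V₂ := by
  apply LinearMap.finrank_range_of_inj
  intro x y h
  simp only [gr_apply, Prod.mk.injEq] at h
  exact Subtype.ext h.2

lemma zmod2_cases (a : ZMod 2) : a = 0 ∨ a = 1 := by revert a; decide

lemma fiber_bot (V₂ : Submodule (ZMod 2) B) (V : Submodule (ZMod 2) (A × B)) :
    (V.map (LinearMap.fst (ZMod 2) A B) = ⊥ ∧ V.map (LinearMap.snd (ZMod 2) A B) = V₂) ↔
      V = (⊥ : Submodule (ZMod 2) A).prod V₂ := by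
  constructor
  · rintro ⟨h1, rfl⟩
    have h0 : ∀ a b, (a, b) ∈ V → a = 0 := by
      intro a b hab
      rw [← Submodule.mem_bot (ZMod 2), ← h1]
      exact ⟨(a, b), hab, rfl⟩
    ext ⟨a, b⟩
    simp only [Submodule.mem_prod, Submodule.mem_bot, Submodule.mem_map, LinearMap.snd_apply,
      Prod.exists, exists_eq_right]
    constructor
    · intro h
      exact ⟨h0 a b h, a, h⟩
    · rintro ⟨rfl, a, h⟩
      rwa [h0 a b h] at h
  · rintro rfl
    simp

lemma fiber_line (e : A) (he : e ≠ 0) (V₂ : Submodule (ZMod 2) B)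
    (V : Submodule (ZMod 2) (A × B)) :
    (V.map (LinearMap.fst (ZMod 2) A B) = Submodule.span (ZMod 2) {e} ∧
      V.map (LinearMap.snd (ZMod 2) A B) = V₂) ↔
      (V = (Submodule.span (ZMod 2) {e}).prod V₂ ∨ ∃ φ, φ ≠ 0 ∧ LinearMap.range (gr e V₂ φ) = V) := by
  constructor
  · rintro ⟨h1, rfl⟩
    have h0 : ∀ a b, (a, b) ∈ V → ∃ c : ZMod 2, a = c • e := by
      intro a b hab
      have : a ∈ Submodule.span (ZMod 2) {e} := by
        rw [← h1]; exact ⟨(a, b), hab, rfl⟩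
      obtain ⟨c, hc⟩ := Submodule.mem_span_singleton.1 this
      exact ⟨c, hc.symm⟩
    by_cases hV : ((e, 0) : A × B) ∈ V
    · left
      ext ⟨a, b⟩
      rw [Submodule.mem_prod]
      constructor
      · intro h
        refine ⟨?_, ⟨(a, b), h, rfl⟩⟩
        rw [← h1]; exact ⟨(a, b), h, rfl⟩
      · rintro ⟨ha, ⟨a', b'⟩, h, rfl⟩
        obtain ⟨c, rfl⟩ := h0 a' b' h
        obtain ⟨d, rfl⟩ := Submodule.mem_span_singleton.1 ha
        have := V.add_mem h (V.smul_mem (d - c) hV)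
        simpa [← add_smul] using this
    · right
      obtain ⟨l, hl⟩ := Module.Projective.exists_dual_eq_one (ZMod 2) he
      let s := (LinearMap.snd (ZMod 2) A B).submoduleMap V
      have hs : Function.Bijective s := by
        refine ⟨?_, LinearMap.submoduleMap_surjective _ _⟩
        rw [← LinearMap.ker_eq_bot, LinearMap.ker_eq_bot']
        rintro ⟨⟨a, b⟩, h⟩ hb
        have hb' : b = 0 := congrArg Subtype.val hb
        subst hb'
        obtain ⟨c, rfl⟩ := h0 a _ h
        rcases zmod2_cases c with rfl | rfl
        · simp
        · rw [one_smul] at h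
          exact absurd h hV
      let E := LinearEquiv.ofBijective s hs
      let φ : Module.Dual (ZMod 2) (V.map (LinearMap.snd (ZMod 2) A B)) :=
        l.comp ((LinearMap.fst (ZMod 2) A B).comp (V.subtype.comp E.symm.toLinearMap))
      have hφ : ∀ v : V, gr e _ φ (E v) = v := by
        rintro ⟨⟨a, b⟩, h⟩
        obtain ⟨c, rfl⟩ := h0 a b h
        rw [gr_apply]
        apply Prod.ext
        · simp [φ, hl]
        · rfl
      refine ⟨φ, ?_, ?_⟩
      · intro hφ0
        have : e ∈ V.map (LinearMap.fst (ZMod 2) A B) := by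
          rw [h1]; exact Submodule.mem_span_singleton_self e
        obtain ⟨v, hv, hve⟩ := this
        have := hφ ⟨v, hv⟩
        rw [gr_apply, hφ0] at this
        have := congrArg Prod.fst this
        simp at this
        rw [LinearMap.fst_apply, ← this] at hve
        exact he hve.symm
      · ext v
        constructor
        · rintro ⟨w, rfl⟩
          obtain ⟨v, rfl⟩ := E.surjective w
          rw [hφ]; exact v.2
        · intro hv
          exact ⟨E ⟨v, hv⟩, hφ _⟩
  · rintro (rfl | ⟨φ, hφ, rfl⟩)
    · simp
    · constructor
      · apply le_antisymm
        · rintro _ ⟨_, ⟨w, rfl⟩, rfl⟩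
          exact Submodule.mem_span_singleton.2 ⟨φ w, rfl⟩
        · rw [Submodule.span_singleton_le_iff_mem]
          obtain ⟨w, hw⟩ : ∃ w, φ w ≠ 0 := by
            by_contra! h
            exact hφ (LinearMap.ext h)
          refine ⟨_, ⟨w, rfl⟩, ?_⟩
          rw [gr_apply, (zmod2_cases _).resolve_left hw]
          simp
      · ext b
        constructor
        · rintro ⟨_, ⟨w, rfl⟩, rfl⟩
          exact w.2
        · intro hb
          exact ⟨_, ⟨⟨b, hb⟩, rfl⟩, rfl⟩

open Classical in
lemma count (V₁ : Submodule (ZMod 2) A) (V₂ : Submodule (ZMod 2) B)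
    (h1 : Module.finrank (ZMod 2) V₁ ≤ 1) (h2 : Module.finrank (ZMod 2) V₂ ≤ 2) :
    ∑ V : Submodule (ZMod 2) (A × B) with (V.map (LinearMap.fst (ZMod 2) A B) = V₁ ∧
      V.map (LinearMap.snd (ZMod 2) A B) = V₂), cco (Module.finrank (ZMod 2) V) =
    cco (Module.finrank (ZMod 2) V₁) * cco (Module.finrank (ZMod 2) V₂) := by
  rcases Nat.le_one_iff_eq_zero_or_eq_one.1 h1 with h | h
  · rw [Submodule.finrank_eq_zero] at h
    subst h
    simp only [fiber_bot]
    rw [Finset.filter_eq' , if_pos (Finset.mem_univ _), Finset.sum_singleton, finrank_subprod]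
    simp [cco]
  · obtain ⟨⟨e, heV⟩, he0, he⟩ := finrank_eq_one_iff'.1 h
    have he0' : e ≠ 0 := fun hh => he0 (Subtype.ext hh)
    have hV1 : V₁ = Submodule.span (ZMod 2) {e} := by
      apply le_antisymm
      · intro a ha
        obtain ⟨c, hc⟩ := he ⟨a, ha⟩
        exact Submodule.mem_span_singleton.2 ⟨c, congrArg Subtype.val hc⟩
      · rwa [Submodule.span_singleton_le_iff_mem]
    rw [h]
    have hprod := finrank_subprod V₁ V₂
    rw [h] at hprod
    subst hV1
    haveI : Fintype (Module.Dual (ZMod 2) V₂) :=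
      @Fintype.ofFinite _ (Module.finite_of_finite (ZMod 2))
    simp only [fiber_line e he0']
    have hfil : (Finset.univ.filter (fun V : Submodule (ZMod 2) (A × B) =>
        (V = (Submodule.span (ZMod 2) {e}).prod V₂ ∨ ∃ φ, φ ≠ 0 ∧ LinearMap.range (gr e V₂ φ) = V)))
      = insert ((Submodule.span (ZMod 2) {e}).prod V₂)
        ((Finset.univ.erase 0).image (fun φ => LinearMap.range (gr e V₂ φ))) := by
      ext V; simp
    have hmem : ∀ φ : Module.Dual (ZMod 2) V₂, ∀ c : ZMod 2, ∀ w : V₂,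
        ((c • e, (w : B)) ∈ LinearMap.range (gr e V₂ φ)) → c = φ w := by
      rintro φ c w ⟨w', hw'⟩
      rw [gr_apply, Prod.mk.injEq] at hw'
      have := Subtype.ext hw'.2
      subst this
      exact (smul_left_injective _ he0' hw'.1).symm
    rw [hfil, Finset.sum_insert, Finset.sum_image]
    · simp only [finrank_gr, hprod, Finset.sum_const]
      rw [Finset.card_erase_of_mem (Finset.mem_univ _), Finset.card_univ,
        Module.card_eq_pow_finrank (K := ZMod 2), Subspace.dual_finrank_eq, ZMod.card]
      generalize Module.finrank (ZMod 2) V₂ = d at *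
      interval_cases d <;> norm_num [cco]
    · intro φ _ ψ _ hφψ
      ext w
      apply hmem ψ
      simp only at hφψ
      rw [← hφψ]
      exact ⟨w, rfl⟩
    · simp only [Finset.mem_image, not_exists, not_and]
      intro φ _ hφ
      have : ((1 : ZMod 2) • e, ((0 : V₂) : B)) ∈ LinearMap.range (gr e V₂ φ) := by
        rw [hφ]
        simp [Submodule.mem_span_singleton_self]
      have := hmem φ 1 0 this
      simp at this
end count

open Classical in
lemma main_sum (τ₁ : Matrix (Fin 1) (Fin 1) ℂ) (τ₂ : Matrix (Fin 2) (Fin 2) ℂ) :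
    ∑ V : Submodule (ZMod 2) (ThetaChar (1 + 2)),
      cco (Module.finrank (ZMod 2) V) * Fsub (blockDiag τ₁ τ₂) V =
    (∑ V : Submodule (ZMod 2) (ThetaChar 1), cco (Module.finrank (ZMod 2) V) * Fsub τ₁ V) *
    (∑ V : Submodule (ZMod 2) (ThetaChar 2), cco (Module.finrank (ZMod 2) V) * Fsub τ₂ V) := by
  let f := (chproj1 1 2).prod (chproj2 1 2)
  have hf : Function.Bijective f := by
    rw [Fintype.bijective_iff_injective_and_card]
    constructor
    · intro v w h
      have h1 := congrArg Prod.fst h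
      have h2 := congrArg Prod.snd h
      have h11 := congrArg Prod.fst h1
      have h12 := congrArg Prod.snd h1
      have h21 := congrArg Prod.fst h2
      have h22 := congrArg Prod.snd h2
      apply Prod.ext
      · funext i
        refine Fin.addCases (fun j => ?_) (fun j => ?_) i
        · exact congrFun h11 j
        · exact congrFun h21 j
      · funext i
        refine Fin.addCases (fun j => ?_) (fun j => ?_) i
        · exact congrFun h12 j
        · exact congrFun h22 j
    · simp
  let E := LinearEquiv.ofBijective f hf
  have hF : ∀ V : Submodule (ZMod 2) (ThetaChar (1 + 2)),
      cco (Module.finrank (ZMod 2) V) * Fsub (blockDiag τ₁ τ₂) V =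
      (fun W : Submodule (ZMod 2) (ThetaChar 1 × ThetaChar 2) =>
        cco (Module.finrank (ZMod 2) W) * (Fsub τ₁ (W.map (LinearMap.fst (ZMod 2) _ _)) *
          Fsub τ₂ (W.map (LinearMap.snd (ZMod 2) _ _))))
        ((Submodule.orderIsoMapComap E).toEquiv V) := by
    intro V
    have hm : (Submodule.orderIsoMapComap E).toEquiv V = V.map f := rfl
    have hr : Module.finrank (ZMod 2) (V.map f) = Module.finrank (ZMod 2) V :=
      (LinearEquiv.finrank_map_eq E V)
    have hm1 : (V.map f).map (LinearMap.fst (ZMod 2) _ _) = V.map (chproj1 1 2) := by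
      rw [← Submodule.map_comp]; rfl
    have hm2 : (V.map f).map (LinearMap.snd (ZMod 2) _ _) = V.map (chproj2 1 2) := by
      rw [← Submodule.map_comp]; rfl
    rw [hm]
    simp only [hr, hm1, hm2]
    by_cases h4 : Module.finrank (ZMod 2) V ≤ 4
    · congr 1
      unfold Fsub
      simp only [theta_block, Finset.prod_mul_distrib, mul_pow]
      rw [prod_map_pow V (chproj1 1 2) (fun v => theta v τ₁) h4,
        prod_map_pow V (chproj2 1 2) (fun v => theta v τ₂) h4]
    · obtain ⟨k, hk⟩ := Nat.exists_eq_add_of_lt (not_le.1 h4)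
      rw [hk, show 4 + k + 1 = k + 5 by ring]
      simp [cco]
  rw [Finset.sum_congr rfl (fun V _ => hF V)]
  refine (Equiv.sum_comp (Submodule.orderIsoMapComap E).toEquiv
    (fun W : Submodule (ZMod 2) (ThetaChar 1 × ThetaChar 2) =>
        cco (Module.finrank (ZMod 2) W) * (Fsub τ₁ (W.map (LinearMap.fst (ZMod 2) _ _)) *
          Fsub τ₂ (W.map (LinearMap.snd (ZMod 2) _ _))))).trans ?_
  rw [← Finset.sum_fiberwise Finset.univ (fun W : Submodule (ZMod 2) (ThetaChar 1 × ThetaChar 2) =>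
    (W.map (LinearMap.fst (ZMod 2) _ _), W.map (LinearMap.snd (ZMod 2) _ _)))]
  rw [Fintype.sum_prod_type, Finset.sum_mul_sum]
  apply Finset.sum_congr rfl
  intro V₁ _
  apply Finset.sum_congr rfl
  intro V₂ _
  have : ∀ c d : ℂ, (Fsub τ₁ V₁ * Fsub τ₂ V₂ ≠ 0 → c = d) →
      c * (Fsub τ₁ V₁ * Fsub τ₂ V₂) = d * (Fsub τ₁ V₁ * Fsub τ₂ V₂) := by
    intro c d h
    by_cases h0 : Fsub τ₁ V₁ * Fsub τ₂ V₂ = 0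
    · simp [h0]
    · rw [h h0]
  trans (cco (Module.finrank (ZMod 2) V₁) * cco (Module.finrank (ZMod 2) V₂)) *
    (Fsub τ₁ V₁ * Fsub τ₂ V₂)
  · rw [← this _ _ (fun h0 => count V₁ V₂ ?_ ?_), Finset.sum_mul]
    · simp only [Prod.mk.injEq]
      apply Finset.sum_congr rfl
      intro W hW
      rw [Finset.mem_filter] at hW
      rw [hW.2.1, hW.2.2]
    · by_contra! h
      exact h0 (by rw [Fsub_one τ₁ V₁ h, zero_mul])
    · by_contra! h
      exact h0 (by rw [Fsub_two τ₂ V₂ h, mul_zero])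
  · ring

lemma Gform_zero_of {g i : ℕ} (τ : Matrix (Fin g) (Fin g) ℂ)
    (h : ∀ V : Submodule (ZMod 2) (ThetaChar g), i ≤ Module.finrank (ZMod 2) V → Fsub τ V = 0) :
    Gform g i τ = 0 := by
  rw [Gform_eq]
  apply Finset.sum_eq_zero
  intro V _
  split_ifs with hV
  · exact h V hV.ge
  · rfl

theorem Xi3_factorization (τ₁ : Matrix (Fin 1) (Fin 1) ℂ) (τ₂ : Matrix (Fin 2) (Fin 2) ℂ)
    (hτ₁ : IsSiegel τ₁) (hτ₂ : IsSiegel τ₂) :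
    Xi3 (blockDiag τ₁ τ₂) = Xi1 τ₁ * Xi2 τ₂ := by
  have h := main_sum τ₁ τ₂
  rw [sum_cco, sum_cco, sum_cco, Gform_zero_of (i := 2) τ₁ (Fsub_one τ₁),
    Gform_zero_of (i := 3) τ₁ (fun V hV => Fsub_one τ₁ V (by omega)),
    Gform_zero_of (i := 3) τ₂ (Fsub_two τ₂)] at h
  change Gform 3 0 (blockDiag τ₁ τ₂) - Gform 3 1 (blockDiag τ₁ τ₂) +
    2 * Gform 3 2 (blockDiag τ₁ τ₂) - 8 * Gform 3 3 (blockDiag τ₁ τ₂) = _ at h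
  unfold Xi3 Xi1 Xi2
  rw [h]
  ring
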